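/- CVaR_β is subadditive (and hence, together with monotonicity, translation equivariance and positive homogeneity, a coherent risk measure): for all integrable real random variables X and Y on a common probability space and every β ∈ (0,1), CVaR_β[X + Y] ≤ CVaR_β[X] + CVaR_β[Y]. -/

import Mathlib

open MeasureTheory

/-!
The positive part is subadditive, so the function minimised in `CVaR_β[X + Y]`, evaluated at
`s + t`, is at most the sum of the one for `X` at `s` and the one for `Y` at `t`; take infima over
`s` and `t`. The infima are genuine because the functions are bounded below: as `β > 0`, there is
`u` with `ℙ(u ≤ X) ≥ 1 - β`, and such a `u` is a lower bound, trivially at `t ≥ u` and by Markov's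
inequality for `(X - t)₊` at `t < u`.
-/

section

variable {Ω : Type*} [MeasurableSpace Ω] {μ : Measure Ω} {X Y : Ω → ℝ} {β s t u r : ℝ}

/-- The Rockafellar–Uryasev function `t ↦ t + (1 - β)⁻¹ E[(X - t)₊]`, whose infimum is `CVaR_β[X]`.
The integral is `0` by convention when `(X - t)₊` is not integrable. -/
noncomputable def cvarObjective (μ : Measure Ω) (β : ℝ) (X : Ω → ℝ) (t : ℝ) : ℝ :=
  t + (1 - β)⁻¹ * ∫ ω, max (X ω - t) 0 ∂μ

/-- The conditional value-at-risk `CVaR_β[X]`, as an infimum in `ℝ`, hence `0` by convention when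
the objective is unbounded below. -/
noncomputable def cvar (μ : Measure Ω) (β : ℝ) (X : Ω → ℝ) : ℝ :=
  ⨅ t, cvarObjective μ β X t

theorem max_add_zero_le {α : Type*} [AddCommMonoid α] [LinearOrder α] [IsOrderedAddMonoid α]
    (a b : α) : max (a + b) 0 ≤ max a 0 + max b 0 := by
  simpa only [add_zero] using max_add_add_le_max_add_max (a := a) (b := b) (c := 0) (d := 0)

theorem integrable_max_add_zero (hXm : AEStronglyMeasurable X μ) (hYm : AEStronglyMeasurable Y μ)
    (hX : Integrable (fun ω ↦ max (X ω) 0) μ) (hY : Integrable (fun ω ↦ max (Y ω) 0) μ) :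
    Integrable (fun ω ↦ max (X ω + Y ω) 0) μ := by
  refine (hX.add hY).mono' ((hXm.add hYm).sup aestronglyMeasurable_const) (.of_forall fun ω ↦ ?_)
  rw [Real.norm_of_nonneg (le_max_right _ _)]
  exact max_add_zero_le (X ω) (Y ω)

theorem integrable_max_sub_const_zero [IsFiniteMeasure μ] (hXm : AEStronglyMeasurable X μ)
    (hX : Integrable (fun ω ↦ max (X ω) 0) μ) (t : ℝ) :
    Integrable (fun ω ↦ max (X ω - t) 0) μ := by
  simpa only [sub_eq_add_neg] using
    integrable_max_add_zero hXm aestronglyMeasurable_const hX (integrable_const (max (-t) 0))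

theorem integral_max_add_sub_add_le (hX : Integrable (fun ω ↦ max (X ω - s) 0) μ)
    (hY : Integrable (fun ω ↦ max (Y ω - t) 0) μ) :
    ∫ ω, max (X ω + Y ω - (s + t)) 0 ∂μ ≤
      ∫ ω, max (X ω - s) 0 ∂μ + ∫ ω, max (Y ω - t) 0 ∂μ := by
  rw [← integral_add hX hY]
  refine integral_mono_of_nonneg (.of_forall fun ω ↦ le_max_right _ _) (hX.add hY)
    (.of_forall fun ω ↦ ?_)
  simpa only [add_sub_add_comm] using max_add_zero_le (X ω - s) (Y ω - t)

theorem cvarObjective_add_le (hβ : β ≤ 1) (hX : Integrable (fun ω ↦ max (X ω - s) 0) μ)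
    (hY : Integrable (fun ω ↦ max (Y ω - t) 0) μ) :
    cvarObjective μ β (X + Y) (s + t) ≤ cvarObjective μ β X s + cvarObjective μ β Y t := by
  calc
    cvarObjective μ β (X + Y) (s + t)
      ≤ s + t + (1 - β)⁻¹ * (∫ ω, max (X ω - s) 0 ∂μ + ∫ ω, max (Y ω - t) 0 ∂μ) := by
        unfold cvarObjective
        gcongr
        exact integral_max_add_sub_add_le hX hY
    _ = cvarObjective μ β X s + cvarObjective μ β Y t := by
        unfold cvarObjective
        ring

theorem sub_mul_measureReal_le_integral_max_sub (htu : t < u)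
    (hX : Integrable (fun ω ↦ max (X ω - t) 0) μ) :
    (u - t) * μ.real {ω | u ≤ X ω} ≤ ∫ ω, max (X ω - t) 0 ∂μ := by
  have tail_eq : {ω | u ≤ X ω} = {ω | u - t ≤ max (X ω - t) 0} := by
    ext ω
    simp [htu.not_ge]
  rw [tail_eq]
  exact mul_meas_ge_le_integral_of_nonneg (.of_forall fun ω ↦ le_max_right _ _) hX (u - t)

theorem le_cvarObjective_of_le_measureReal (hβ : β < 1) (hu : 1 - β ≤ μ.real {ω | u ≤ X ω})
    (hX : Integrable (fun ω ↦ max (X ω - t) 0) μ) : u ≤ cvarObjective μ β X t := by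
  have hβ' : 0 < 1 - β := sub_pos.2 hβ
  suffices u - t ≤ (1 - β)⁻¹ * ∫ ω, max (X ω - t) 0 ∂μ from sub_le_iff_le_add'.1 this
  rw [le_inv_mul_iff₀ hβ']
  rcases le_or_gt u t with hut | htu
  · exact (mul_nonpos_of_nonneg_of_nonpos hβ'.le (sub_nonpos.2 hut)).trans
      (integral_nonneg fun ω ↦ le_max_right _ _)
  · calc
      (1 - β) * (u - t) ≤ μ.real {ω | u ≤ X ω} * (u - t) :=
        mul_le_mul_of_nonneg_right hu (sub_pos.2 htu).le
      _ = (u - t) * μ.real {ω | u ≤ X ω} := mul_comm _ _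
      _ ≤ ∫ ω, max (X ω - t) 0 ∂μ := sub_mul_measureReal_le_integral_max_sub htu hX

theorem exists_lt_measureReal_setOf_le [IsFiniteMeasure μ] (X : Ω → ℝ) (hr : r < μ.real Set.univ) :
    ∃ u, r < μ.real {ω | u ≤ X ω} := by
  have tail_antitone : Antitone fun u ↦ {ω | u ≤ X ω} := fun _ _ huv _ hω ↦ huv.trans hω
  have iUnion_tail : ⋃ u, {ω | u ≤ X ω} = Set.univ :=
    Set.iUnion_eq_univ_iff.2 fun ω ↦ ⟨X ω, le_refl (X ω)⟩
  have tendsto_tail := tendsto_measure_iUnion_atBot (μ := μ) tail_antitone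
  rw [iUnion_tail] at tendsto_tail
  have tendsto_real := (ENNReal.tendsto_toReal (measure_ne_top μ Set.univ)).comp tendsto_tail
  exact (tendsto_real.eventually (lt_mem_nhds hr)).exists

theorem bddBelow_range_cvarObjective [IsProbabilityMeasure μ] (hβ : β ∈ Set.Ioo (0 : ℝ) 1)
    (hX : ∀ t, Integrable (fun ω ↦ max (X ω - t) 0) μ) :
    BddBelow (Set.range (cvarObjective μ β X)) := by
  have tail_lt : 1 - β < μ.real Set.univ := by
    rw [probReal_univ]
    exact sub_lt_self 1 hβ.1
  obtain ⟨u, hu⟩ := exists_lt_measureReal_setOf_le X tail_lt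
  exact ⟨u, Set.forall_mem_range.2 fun t ↦ le_cvarObjective_of_le_measureReal hβ.2 hu.le (hX t)⟩

theorem cvar_subadditive_general [IsProbabilityMeasure μ] (hXm : AEStronglyMeasurable X μ)
    (hYm : AEStronglyMeasurable Y μ) (hX : Integrable (fun ω ↦ max (X ω) 0) μ)
    (hY : Integrable (fun ω ↦ max (Y ω) 0) μ) (hβ : β ∈ Set.Ioo (0 : ℝ) 1) :
    cvar μ β (X + Y) ≤ cvar μ β X + cvar μ β Y := by
  have integrable_add := integrable_max_add_zero hXm hYm hX hY
  have bdd : BddBelow (Set.range (cvarObjective μ β (X + Y))) :=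
    bddBelow_range_cvarObjective hβ (integrable_max_sub_const_zero (hXm.add hYm) integrable_add)
  refine le_ciInf_add_ciInf fun s t ↦ ?_
  calc
    cvar μ β (X + Y) ≤ cvarObjective μ β (X + Y) (s + t) := ciInf_le bdd (s + t)
    _ ≤ cvarObjective μ β X s + cvarObjective μ β Y t :=
      cvarObjective_add_le hβ.2.le (integrable_max_sub_const_zero hXm hX s)
        (integrable_max_sub_const_zero hYm hY t)

end

/-- Subadditivity of `CVaR_β`: `CVaR_β[X + Y] ≤ CVaR_β[X] + CVaR_β[Y]`. -/
theorem cvar_subadditive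
    {Ω : Type*} [MeasurableSpace Ω] (μ : Measure Ω) [IsProbabilityMeasure μ]
    (X Y : Ω → ℝ) (hX : Integrable X μ) (hY : Integrable Y μ)
    (β : ℝ) (hβ : β ∈ Set.Ioo (0 : ℝ) 1) :
    (⨅ t : ℝ, (t + (1 - β)⁻¹ * ∫ ω, max ((X ω + Y ω) - t) 0 ∂μ)) ≤
      (⨅ t : ℝ, (t + (1 - β)⁻¹ * ∫ ω, max (X ω - t) 0 ∂μ)) +
        ⨅ t : ℝ, (t + (1 - β)⁻¹ * ∫ ω, max (Y ω - t) 0 ∂μ) :=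
  cvar_subadditive_general hX.aestronglyMeasurable hY.aestronglyMeasurable hX.pos_part hY.pos_part
    hβ
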